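/- arXiv:1909.04699 — 3 statements merged into one kernel-verified Lean document; each statement's English description precedes it below -/
import Mathlib

section
/- Let n ≥ 1 and let x, y, z ∈ ℝⁿ (Euclidean norm) with x ≠ y, z ≠ x and z ≠ y, and let z′ be the orthogonal projection of z onto the affine line through x and y. Then (|x−z| + |y−z|)² ≥ |x−y|² + (1/4) · |z−z′|² · |x−y|² / ( |x−z| · |y−z| ). -/
open scoped RealInnerProductSpace

/-!
Put `u = x - z` and `v = y - z`. The quantity `|z - z'|² |x - y|²` is the Gram determinant
`|u|² |v|² - ⟪u, v⟫² = (|u| |v| - ⟪u, v⟫) (|u| |v| + ⟪u, v⟫)`. By Cauchy–Schwarz the first factor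
is at most `2 |u| |v|`, while the second is half of `(|u| + |v|)² - |u - v|²`. This gives the
inequality with `1` in place of `1/4`, which is optimal in dimension at least two: let the
angle between `u` and `v` tend to `π`.
-/

section InnerProductSpace

variable {V : Type*} [NormedAddCommGroup V] [InnerProductSpace ℝ V]

theorem norm_add_norm_sq_sub_norm_sub_sq (u v : V) :
    (‖u‖ + ‖v‖) ^ 2 - ‖u - v‖ ^ 2 = 2 * (‖u‖ * ‖v‖ + ⟪u, v⟫) := by
  rw [norm_sub_sq_real]
  ring

theorem norm_sq_mul_norm_sq_sub_inner_sq_le (u v : V) :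
    ‖u‖ ^ 2 * ‖v‖ ^ 2 - ⟪u, v⟫ ^ 2 ≤ ((‖u‖ + ‖v‖) ^ 2 - ‖u - v‖ ^ 2) * (‖u‖ * ‖v‖) := by
  have neg_le_inner : -(‖u‖ * ‖v‖) ≤ ⟪u, v⟫ := neg_le_of_abs_le (abs_real_inner_le_norm u v)
  have sub_inner_le : ‖u‖ * ‖v‖ - ⟪u, v⟫ ≤ 2 * (‖u‖ * ‖v‖) := by linarith
  have add_inner_nonneg : 0 ≤ ‖u‖ * ‖v‖ + ⟪u, v⟫ := by linarith
  calc ‖u‖ ^ 2 * ‖v‖ ^ 2 - ⟪u, v⟫ ^ 2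
      = (‖u‖ * ‖v‖ + ⟪u, v⟫) * (‖u‖ * ‖v‖ - ⟪u, v⟫) := by ring
    _ ≤ (‖u‖ * ‖v‖ + ⟪u, v⟫) * (2 * (‖u‖ * ‖v‖)) := by gcongr
    _ = ((‖u‖ + ‖v‖) ^ 2 - ‖u - v‖ ^ 2) * (‖u‖ * ‖v‖) := by
      rw [norm_add_norm_sq_sub_norm_sub_sq]
      ring

theorem inner_add_smul_add_smul_of_inner_eq_zero {p d : V} (hpd : ⟪p, d⟫ = 0) (s t : ℝ) :
    ⟪p + s • d, p + t • d⟫ = ‖p‖ ^ 2 + s * t * ‖d‖ ^ 2 := by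
  have hdp : ⟪d, p⟫ = 0 := inner_eq_zero_symm.mp hpd
  simp only [inner_add_left, inner_add_right, real_inner_smul_left, real_inner_smul_right,
    real_inner_self_eq_norm_sq, hpd, hdp]
  ring

theorem norm_sq_mul_norm_sq_sub_inner_sq_add_smul_of_inner_eq_zero {p d : V} (hpd : ⟪p, d⟫ = 0)
    (s t : ℝ) :
    ‖p + s • d‖ ^ 2 * ‖p + t • d‖ ^ 2 - ⟪p + s • d, p + t • d⟫ ^ 2 =
      (s - t) ^ 2 * (‖p‖ ^ 2 * ‖d‖ ^ 2) := by
  simp only [← real_inner_self_eq_norm_sq (_ + _),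
    inner_add_smul_add_smul_of_inner_eq_zero hpd]
  ring

theorem norm_sub_sq_mul_norm_sub_sq_eq_of_inner_eq_zero {x y z z' : V}
    (hline : ∃ s : ℝ, z' = x + s • (y - x)) (hperp : ⟪z - z', y - x⟫ = 0) :
    ‖z - z'‖ ^ 2 * ‖x - y‖ ^ 2 =
      ‖x - z‖ ^ 2 * ‖y - z‖ ^ 2 - ⟪x - z, y - z⟫ ^ 2 := by
  obtain ⟨s, hs⟩ := hline
  have hx : x - z = -((z - z') + s • (y - x)) := by rw [hs]; module
  have hy : y - z = -((z - z') + (s - 1) • (y - x)) := by rw [hs]; module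
  rw [hx, hy, norm_neg, norm_neg, inner_neg_neg,
    norm_sq_mul_norm_sq_sub_inner_sq_add_smul_of_inner_eq_zero hperp, norm_sub_rev x y]
  ring

theorem stmt14_general {x y z z' : V} (hzx : z ≠ x) (hzy : z ≠ y)
    (hline : ∃ s : ℝ, z' = x + s • (y - x)) (hperp : ⟪z - z', y - x⟫ = 0) :
    ‖x - y‖ ^ 2 + ‖z - z'‖ ^ 2 * ‖x - y‖ ^ 2 / (‖x - z‖ * ‖y - z‖) ≤
      (‖x - z‖ + ‖y - z‖) ^ 2 := by
  have hpos : 0 < ‖x - z‖ * ‖y - z‖ :=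
    mul_pos (norm_sub_pos_iff.mpr hzx.symm) (norm_sub_pos_iff.mpr hzy.symm)
  rw [← le_sub_iff_add_le', div_le_iff₀ hpos,
    norm_sub_sq_mul_norm_sub_sq_eq_of_inner_eq_zero hline hperp]
  simpa only [sub_sub_sub_cancel_right] using
    norm_sq_mul_norm_sq_sub_inner_sq_le (x - z) (y - z)

end InnerProductSpace

/-- For distinct points `x, y ∈ ℝⁿ` and `z` distinct from both, with `z′` the orthogonal
projection of `z` onto the affine line through `x` and `y`:
`(|x−z| + |y−z|)² ≥ |x−y|² + (1/4)|z−z′|²|x−y|²/(|x−z||y−z|)`. -/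
theorem stmt14 (n : ℕ) (hn : 1 ≤ n) (x y z z' : EuclideanSpace ℝ (Fin n))
    (hxy : x ≠ y) (hzx : z ≠ x) (hzy : z ≠ y)
    (hline : ∃ s : ℝ, z' = x + s • (y - x))
    (hperp : ⟪z - z', y - x⟫ = 0) :
    ‖x - y‖ ^ 2 + (1 / 4) * ‖z - z'‖ ^ 2 * ‖x - y‖ ^ 2 / (‖x - z‖ * ‖y - z‖) ≤
      (‖x - z‖ + ‖y - z‖) ^ 2 := by
  refine le_trans ?_ (stmt14_general hzx hzy hline hperp)
  gcongr
  exact mul_le_of_le_one_left (sq_nonneg _) (by norm_num)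
end

section
/- Let n ≥ 1, let H ⊆ ℝⁿ be a half-space, let x, y ∈ H and let 0 < s < t. Then the Chapman–Kolmogorov identity holds: ∫_H k_H(s, x, z) · k_H(t−s, z, y) dz = k_H(t, x, y). -/
open MeasureTheory Real
open scoped RealInnerProductSpace

/-- The global Gaussian heat kernel `k(t,x,y) = (4πt)^(−n/2) exp(−|x−y|²/(4t))` on ℝⁿ. -/
noncomputable def heatKernel (n : ℕ) (t : ℝ) (x y : EuclideanSpace ℝ (Fin n)) : ℝ :=
  (4 * π * t) ^ (-(n : ℝ) / 2) * Real.exp (-‖x - y‖ ^ 2 / (4 * t))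

/-- The Dirichlet heat kernel of the half-space `H = {z : ⟪z − p, u⟫ > 0}` (where `‖u‖ = 1`):
`k_H(t,x,y) = (1 − exp(−δ_H(x)δ_H(y)/t)) k(t,x,y)` with `δ_H(z) = ⟪z − p, u⟫`. -/
noncomputable def halfSpaceKernel (n : ℕ) (p u : EuclideanSpace ℝ (Fin n)) (t : ℝ)
    (x y : EuclideanSpace ℝ (Fin n)) : ℝ :=
  (1 - Real.exp (-(⟪x - p, u⟫ * ⟪y - p, u⟫) / t)) * heatKernel n t x y

/-!
Let `R` be the reflection across `∂H` and `r = t − s`. The method of images gives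
`k_H(t,x,y) = k(t,x,y) − k(t,x,Ry)`, so `k_H` is odd in each variable under `R`. Since `H` is a
fundamental domain for `R`, the integral of `k_H(s,x,z) k_H(r,z,y)` over `z ∈ H` unfolds to the
integral of `k(s,x,z) k_H(r,z,y)` over the whole space, and there the claim is the semigroup
property of the Gaussian kernel at the two targets `y` and `Ry`.
-/

section GaussianKernel

lemma norm_sub_sq_div_add_norm_sub_sq_div {E : Type*} [NormedAddCommGroup E]
    [InnerProductSpace ℝ E] (x y z : E) {s r : ℝ} (hs : s ≠ 0) (hr : r ≠ 0) (hsr : s + r ≠ 0) :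
    ‖x - z‖ ^ 2 / s + ‖z - y‖ ^ 2 / r
      = ‖x - y‖ ^ 2 / (s + r)
        + ‖z - (s + r)⁻¹ • (r • x + s • y)‖ ^ 2 / (s * r / (s + r)) := by
  have hcenter : z - (s + r)⁻¹ • (r • x + s • y) = (s + r)⁻¹ • (s • (z - y) - r • (x - z)) := by
    rw [eq_inv_smul_iff₀ hsr, smul_sub, smul_inv_smul₀ hsr]
    module
  rw [hcenter, ← sub_add_sub_cancel x z y]
  generalize x - z = a
  generalize z - y = b
  rw [norm_smul, mul_pow, norm_add_sq_real, norm_sub_sq_real, norm_smul, norm_smul,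
    real_inner_smul_left, real_inner_smul_right, real_inner_comm a b]
  simp only [mul_pow, Real.norm_eq_abs, sq_abs]
  field_simp
  ring

variable {n : ℕ}

lemma heatKernel_mul_heatKernel {s r : ℝ} (hs : 0 < s) (hr : 0 < r)
    (x y z : EuclideanSpace ℝ (Fin n)) :
    heatKernel n s x z * heatKernel n r z y
      = heatKernel n (s + r) x y
        * heatKernel n (s * r / (s + r)) z ((s + r)⁻¹ • (r • x + s • y)) := by
  have hcoeff : (4 * π * s) ^ (-(n : ℝ) / 2) * (4 * π * r) ^ (-(n : ℝ) / 2)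
      = (4 * π * (s + r)) ^ (-(n : ℝ) / 2) * (4 * π * (s * r / (s + r))) ^ (-(n : ℝ) / 2) := by
    rw [← Real.mul_rpow (by positivity) (by positivity),
      ← Real.mul_rpow (by positivity) (by positivity)]
    congr 1
    field_simp
  have hexponent := norm_sub_sq_div_add_norm_sub_sq_div x y z hs.ne' hr.ne' (add_pos hs hr).ne'
  simp only [heatKernel]
  rw [mul_mul_mul_comm, hcoeff, mul_mul_mul_comm (_ ^ _) (Real.exp _),
    ← Real.exp_add, ← Real.exp_add]
  congr 2
  simp only [div_mul_eq_div_div_swap]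
  linear_combination -hexponent / 4

lemma integral_heatKernel {t : ℝ} (ht : 0 < t) (y : EuclideanSpace ℝ (Fin n)) :
    ∫ z, heatKernel n t z y = 1 := by
  have hgauss : ∫ z : EuclideanSpace ℝ (Fin n), Real.exp (-‖z‖ ^ 2 / (4 * t))
      = (4 * π * t) ^ ((n : ℝ) / 2) := by
    have h := GaussianFourier.integral_rexp_neg_mul_sq_norm (V := EuclideanSpace ℝ (Fin n))
      (b := (4 * t)⁻¹) (by positivity)
    rw [finrank_euclideanSpace_fin, div_inv_eq_mul] at h
    calc ∫ z : EuclideanSpace ℝ (Fin n), Real.exp (-‖z‖ ^ 2 / (4 * t))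
      _ = ∫ z : EuclideanSpace ℝ (Fin n), Real.exp (-(4 * t)⁻¹ * ‖z‖ ^ 2) := by
        simp only [div_eq_inv_mul, mul_neg, neg_mul]
      _ = (π * (4 * t)) ^ ((n : ℝ) / 2) := h
      _ = (4 * π * t) ^ ((n : ℝ) / 2) := by rw [mul_left_comm, mul_assoc]
  simp only [heatKernel]
  rw [integral_const_mul,
    integral_sub_right_eq_self (fun z => Real.exp (-‖z‖ ^ 2 / (4 * t))) y, hgauss,
    ← Real.rpow_add (by positivity), neg_div, neg_add_cancel, Real.rpow_zero]

lemma integrable_heatKernel {t : ℝ} (ht : 0 < t) (y : EuclideanSpace ℝ (Fin n)) :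
    Integrable fun z => heatKernel n t z y :=
  Integrable.of_integral_ne_zero (by simp [integral_heatKernel ht])

lemma integrable_heatKernel_mul_heatKernel {s r : ℝ} (hs : 0 < s) (hr : 0 < r)
    (x y : EuclideanSpace ℝ (Fin n)) :
    Integrable fun z => heatKernel n s x z * heatKernel n r z y := by
  simp only [heatKernel_mul_heatKernel hs hr]
  exact (integrable_heatKernel (by positivity) _).const_mul _

lemma integral_heatKernel_mul_heatKernel {s r : ℝ} (hs : 0 < s) (hr : 0 < r)
    (x y : EuclideanSpace ℝ (Fin n)) :
    ∫ z, heatKernel n s x z * heatKernel n r z y = heatKernel n (s + r) x y := by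
  simp only [heatKernel_mul_heatKernel hs hr]
  rw [integral_const_mul, integral_heatKernel (by positivity), mul_one]

end GaussianKernel

section Reflection

variable {E : Type*} [NormedAddCommGroup E] [InnerProductSpace ℝ E]

/-- The reflection of `E` across the hyperplane through `p` orthogonal to `u`, which exchanges the
half-space `{z | 0 < ⟪z - p, u⟫}` and its opposite. For `u = 0` it is the identity. -/
noncomputable def hyperplaneReflection (p u : E) : E ≃ᵢ E :=
  ((IsometryEquiv.subRight p).trans (ℝ ∙ u)ᗮ.reflection.toIsometryEquiv).trans
    (IsometryEquiv.addRight p)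

lemma hyperplaneReflection_apply (p u z : E) :
    hyperplaneReflection p u z = (ℝ ∙ u)ᗮ.reflection (z - p) + p :=
  rfl

lemma hyperplaneReflection_hyperplaneReflection (p u z : E) :
    hyperplaneReflection p u (hyperplaneReflection p u z) = z := by
  simp [hyperplaneReflection_apply]

lemma norm_hyperplaneReflection_sub (p u x y : E) :
    ‖hyperplaneReflection p u x - y‖ = ‖x - hyperplaneReflection p u y‖ := by
  rw [← dist_eq_norm, ← (hyperplaneReflection p u).dist_eq,
    hyperplaneReflection_hyperplaneReflection, dist_eq_norm]

lemma inner_hyperplaneReflection_sub (p u z : E) :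
    ⟪hyperplaneReflection p u z - p, u⟫ = -⟪z - p, u⟫ := by
  rw [hyperplaneReflection_apply, add_sub_cancel_right,
    ← (ℝ ∙ u)ᗮ.reflection.inner_map_map (z - p) u,
    Submodule.reflection_orthogonalComplement_singleton_eq_neg, inner_neg_right, neg_neg]

lemma hyperplaneReflection_eq_sub {u : E} (hu : ‖u‖ = 1) (p z : E) :
    hyperplaneReflection p u z = z - (2 * ⟪z - p, u⟫) • u := by
  rw [hyperplaneReflection_apply, Submodule.reflection_orthogonal_apply,
    Submodule.reflection_singleton_apply, hu, real_inner_comm]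
  simp only [RCLike.ofReal_real_eq_id, id, one_pow, div_one]
  module

lemma norm_sub_hyperplaneReflection_sq {u : E} (hu : ‖u‖ = 1) (p x y : E) :
    ‖x - hyperplaneReflection p u y‖ ^ 2 = ‖x - y‖ ^ 2 + 4 * (⟪x - p, u⟫ * ⟪y - p, u⟫) := by
  have hsub : x - hyperplaneReflection p u y = (x - y) + (2 * ⟪y - p, u⟫) • u := by
    rw [hyperplaneReflection_eq_sub hu]
    abel
  have hinner : ⟪x - y, u⟫ = ⟪x - p, u⟫ - ⟪y - p, u⟫ := by
    rw [← inner_sub_left, sub_sub_sub_cancel_right]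
  rw [hsub, norm_add_sq_real, norm_smul, hu, real_inner_smul_right, hinner, mul_one,
    Real.norm_eq_abs, sq_abs]
  ring

variable [FiniteDimensional ℝ E] [MeasurableSpace E] [BorelSpace E]

lemma measurePreserving_hyperplaneReflection (p u : E) :
    MeasurePreserving (hyperplaneReflection p u) :=
  (measurePreserving_add_right volume p).comp
    ((ℝ ∙ u)ᗮ.reflection.measurePreserving.comp (measurePreserving_sub_right volume p))

lemma addHaar_setOf_inner_sub_eq_zero (μ : Measure E) [μ.IsAddHaarMeasure] (p : E) {u : E}
    (hu : u ≠ 0) : μ {z | ⟪z - p, u⟫ = 0} = 0 := by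
  have hcoe : {z | ⟪z - p, u⟫ = 0} = (AffineSubspace.mk' p (ℝ ∙ u)ᗮ : Set E) := by
    ext z
    simp [AffineSubspace.mem_mk', Submodule.mem_orthogonal_singleton_iff_inner_left]
  rw [hcoe]
  refine Measure.addHaar_affineSubspace μ _ fun htop => hu ?_
  have hmem : u + p ∈ AffineSubspace.mk' p (ℝ ∙ u)ᗮ := htop ▸ AffineSubspace.mem_top ℝ E (u + p)
  simpa [AffineSubspace.mem_mk', Submodule.mem_orthogonal_singleton_iff_inner_left] using hmem

lemma hyperplaneReflection_preimage_halfSpace_ae_eq_compl (μ : Measure E) [μ.IsAddHaarMeasure]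
    (p : E) {u : E} (hu : u ≠ 0) :
    hyperplaneReflection p u ⁻¹' {z | 0 < ⟪z - p, u⟫} =ᵐ[μ]
      ({z | 0 < ⟪z - p, u⟫}ᶜ : Set E) := by
  have hboundary : ∀ᵐ z ∂μ, ⟪z - p, u⟫ ≠ 0 := by
    simpa [ae_iff] using addHaar_setOf_inner_sub_eq_zero μ p hu
  refine Filter.eventuallyEq_set.2 (hboundary.mono fun z hz => ?_)
  simp only [Set.mem_preimage, Set.mem_compl_iff, Set.mem_ofPred_eq,
    inner_hyperplaneReflection_sub, neg_pos, not_lt]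
  exact hz.le_iff_lt.symm

end Reflection

lemma integral_eq_setIntegral_add_comp {α G : Type*} [MeasurableSpace α] [NormedAddCommGroup G]
    [NormedSpace ℝ G] {μ : Measure α} {R : α → α} (hR : MeasurePreserving R μ μ)
    (hR_emb : MeasurableEmbedding R) {H : Set α} (hH : MeasurableSet H)
    (hRH : R ⁻¹' H =ᵐ[μ] (Hᶜ : Set α)) {f : α → G} (hf : Integrable f μ) :
    ∫ z, f z ∂μ = ∫ z in H, f z + f (R z) ∂μ := by
  have hRHc : R ⁻¹' Hᶜ =ᵐ[μ] H := by simpa only [Set.preimage_compl, compl_compl] using hRH.compl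
  have hcompl : ∫ z in Hᶜ, f z ∂μ = ∫ z in H, f (R z) ∂μ := by
    rw [← hR.setIntegral_preimage_emb hR_emb, setIntegral_congr_set hRHc]
  have hf_comp : Integrable (fun z => f (R z)) μ := hR.integrable_comp_of_integrable hf
  rw [integral_add hf.integrableOn hf_comp.integrableOn, ← hcompl, integral_add_compl hH hf]

section HalfSpaceKernel

variable {n : ℕ} {u : EuclideanSpace ℝ (Fin n)}

lemma heatKernel_hyperplaneReflection_left (t : ℝ) (p u x y : EuclideanSpace ℝ (Fin n)) :
    heatKernel n t (hyperplaneReflection p u x) y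
      = heatKernel n t x (hyperplaneReflection p u y) := by
  rw [heatKernel, heatKernel, norm_hyperplaneReflection_sub]

lemma halfSpaceKernel_eq_heatKernel_sub (hu : ‖u‖ = 1) {t : ℝ} (ht : t ≠ 0)
    (p x y : EuclideanSpace ℝ (Fin n)) :
    halfSpaceKernel n p u t x y
      = heatKernel n t x y - heatKernel n t x (hyperplaneReflection p u y) := by
  have hexponent : -‖x - hyperplaneReflection p u y‖ ^ 2 / (4 * t)
      = -(⟪x - p, u⟫ * ⟪y - p, u⟫) / t + -‖x - y‖ ^ 2 / (4 * t) := by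
    rw [norm_sub_hyperplaneReflection_sq hu]
    field_simp
    ring
  rw [halfSpaceKernel, heatKernel, heatKernel, hexponent, Real.exp_add]
  ring

lemma halfSpaceKernel_hyperplaneReflection_left (hu : ‖u‖ = 1) {t : ℝ} (ht : t ≠ 0)
    (p x y : EuclideanSpace ℝ (Fin n)) :
    halfSpaceKernel n p u t (hyperplaneReflection p u x) y = -halfSpaceKernel n p u t x y := by
  simp only [halfSpaceKernel_eq_heatKernel_sub hu ht, heatKernel_hyperplaneReflection_left,
    hyperplaneReflection_hyperplaneReflection, neg_sub]

lemma integrable_heatKernel_mul_halfSpaceKernel (hu : ‖u‖ = 1) {s r : ℝ} (hs : 0 < s)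
    (hr : 0 < r) (p x y : EuclideanSpace ℝ (Fin n)) :
    Integrable fun z => heatKernel n s x z * halfSpaceKernel n p u r z y := by
  simp only [halfSpaceKernel_eq_heatKernel_sub hu hr.ne', mul_sub]
  exact (integrable_heatKernel_mul_heatKernel hs hr _ _).sub
    (integrable_heatKernel_mul_heatKernel hs hr _ _)

lemma integral_heatKernel_mul_halfSpaceKernel (hu : ‖u‖ = 1) {s r : ℝ} (hs : 0 < s)
    (hr : 0 < r) (p x y : EuclideanSpace ℝ (Fin n)) :
    ∫ z, heatKernel n s x z * halfSpaceKernel n p u r z y = halfSpaceKernel n p u (s + r) x y := by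
  simp only [halfSpaceKernel_eq_heatKernel_sub hu hr.ne',
    halfSpaceKernel_eq_heatKernel_sub hu (add_pos hs hr).ne', mul_sub]
  rw [integral_sub (integrable_heatKernel_mul_heatKernel hs hr _ _)
      (integrable_heatKernel_mul_heatKernel hs hr _ _),
    integral_heatKernel_mul_heatKernel hs hr, integral_heatKernel_mul_heatKernel hs hr]

end HalfSpaceKernel

theorem stmt15_general (n : ℕ) (p u : EuclideanSpace ℝ (Fin n)) (hu : ‖u‖ = 1)
    (x y : EuclideanSpace ℝ (Fin n)) (s t : ℝ) (hs : 0 < s) (hst : s < t) :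
    (∫ z in {z : EuclideanSpace ℝ (Fin n) | 0 < ⟪z - p, u⟫},
      halfSpaceKernel n p u s x z * halfSpaceKernel n p u (t - s) z y)
      = halfSpaceKernel n p u t x y := by
  have hr : 0 < t - s := sub_pos.2 hst
  have hu0 : u ≠ 0 := norm_ne_zero_iff.1 (hu ▸ one_ne_zero)
  have hH : MeasurableSet {z : EuclideanSpace ℝ (Fin n) | 0 < ⟪z - p, u⟫} :=
    (isOpen_lt continuous_const (by fun_prop)).measurableSet
  let f z := heatKernel n s x z * halfSpaceKernel n p u (t - s) z y
  have hfold z : halfSpaceKernel n p u s x z * halfSpaceKernel n p u (t - s) z y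
      = f z + f (hyperplaneReflection p u z) := by
    simp only [f]
    rw [halfSpaceKernel_hyperplaneReflection_left hu hr.ne',
      halfSpaceKernel_eq_heatKernel_sub hu hs.ne' p x z]
    ring
  simp only [hfold]
  rw [← integral_eq_setIntegral_add_comp (measurePreserving_hyperplaneReflection p u)
      (hyperplaneReflection p u).toHomeomorph.measurableEmbedding hH
      (hyperplaneReflection_preimage_halfSpace_ae_eq_compl volume p hu0)
      (integrable_heatKernel_mul_halfSpaceKernel hu hs hr p x y),
    integral_heatKernel_mul_halfSpaceKernel hu hs hr, add_sub_cancel]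

/-- Chapman–Kolmogorov identity for the half-space Dirichlet heat kernel: for a half-space
`H = {z : ⟪z − p, u⟫ > 0}` (with `‖u‖ = 1`), `x, y ∈ H` and `0 < s < t`:
`∫_H k_H(s,x,z) k_H(t−s,z,y) dz = k_H(t,x,y)`. -/
theorem stmt15 (n : ℕ) (hn : 1 ≤ n) (p u : EuclideanSpace ℝ (Fin n)) (hu : ‖u‖ = 1)
    (x y : EuclideanSpace ℝ (Fin n)) (hx : 0 < ⟪x - p, u⟫) (hy : 0 < ⟪y - p, u⟫)
    (s t : ℝ) (hs : 0 < s) (hst : s < t) :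
    (∫ z in {z : EuclideanSpace ℝ (Fin n) | 0 < ⟪z - p, u⟫},
      halfSpaceKernel n p u s x z * halfSpaceKernel n p u (t - s) z y)
      = halfSpaceKernel n p u t x y :=
  stmt15_general n p u hu x y s t hs hst
end

section
/- Let n ≥ 2 and work in ℝⁿ with standard basis e₁, …, eₙ and Euclidean norm. Let x = xₙ·eₙ with xₙ > 0 and y = y_{n−1}·e_{n−1} + yₙ·eₙ with y_{n−1} ≥ 0 and yₙ ≥ 0, and suppose x and y lie in the open unit ball B = B(0,1), that δ(x) ≤ δ(y), and that δ(y) < |x−y|/8, where δ(z) = 1 − |z|. Then |x−y|/2 ≤ y_{n−1} ≤ |x−y|. -/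
/-!
Let `z` be the orthogonal projection of `y` onto the ray through `x`. On a ray distances are
differences of norms, so `‖x - z‖ = |‖x‖ - ‖z‖| ≤ |‖x‖ - ‖y‖| + ‖y - z‖`, and the first term is at
most `1 - ‖y‖ < ‖x - y‖ / 8`. If `‖y - z‖` were smaller than `‖x - y‖ / 2`, both legs of the right
triangle `x z y` would be too short for Pythagoras: `(1/2)² + (1/8 + 1/2)² < 1`.
-/

open scoped RealInnerProductSpace

theorem norm_sub_le_abs_norm_sub_norm_add_of_sameRay {E : Type*} [SeminormedAddCommGroup E]
    [NormedSpace ℝ E] {x z : E} (hxz : SameRay ℝ x z) (y : E) :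
    ‖x - z‖ ≤ |‖x‖ - ‖y‖| + ‖y - z‖ :=
  calc
    ‖x - z‖ = |‖x‖ - ‖z‖| := hxz.norm_sub
    _ ≤ |‖x‖ - ‖y‖| + |‖y‖ - ‖z‖| := abs_sub_le _ _ _
    _ ≤ |‖x‖ - ‖y‖| + ‖y - z‖ := by gcongr; exact abs_norm_sub_norm_le y z

theorem abs_norm_sub_norm_le_of_one_sub_norm_le {E : Type*} [SeminormedAddCommGroup E] {x y : E}
    (hx : ‖x‖ ≤ 1) (hyx : ‖y‖ ≤ ‖x‖) (h : 1 - ‖y‖ ≤ ‖x - y‖ / 8) :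
    |‖x‖ - ‖y‖| ≤ (√3 - 1) / 2 * ‖x - y‖ := by
  have h_const : (1 / 8 : ℝ) ≤ (√3 - 1) / 2 := by
    linarith [Real.le_sqrt_of_sq_le (show (5 / 4 : ℝ) ^ 2 ≤ 3 by norm_num)]
  calc
    |‖x‖ - ‖y‖| = ‖x‖ - ‖y‖ := abs_of_nonneg (sub_nonneg.mpr hyx)
    _ ≤ 1 / 8 * ‖x - y‖ := by linarith
    _ ≤ (√3 - 1) / 2 * ‖x - y‖ := by gcongr

theorem half_le_of_sq_eq_sq_add_sq {b d t : ℝ} (hb : 0 ≤ b) (ht : 0 ≤ t)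
    (hd : d ^ 2 = b ^ 2 + t ^ 2) (htb : t ≤ (√3 - 1) / 2 * d + b) : d / 2 ≤ b := by
  by_contra! hbd
  have ht_lt : t < √3 / 2 * d := by linarith
  have hb_sq : b ^ 2 < (d / 2) ^ 2 := by gcongr
  have ht_sq : t ^ 2 < (√3 / 2 * d) ^ 2 := by gcongr
  have h_sum : (d / 2) ^ 2 + (√3 / 2 * d) ^ 2 = d ^ 2 := by
    rw [mul_pow, div_pow √3, Real.sq_sqrt zero_le_three]
    ring
  linarith

section InnerProductSpace

variable {E : Type*} [SeminormedAddCommGroup E] [InnerProductSpace ℝ E] {x y z : E}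

theorem norm_sub_sq_eq_of_inner_sub_sub_eq_zero (hz : ⟪x - z, y - z⟫ = 0) :
    ‖x - y‖ ^ 2 = ‖y - z‖ ^ 2 + ‖x - z‖ ^ 2 := by
  rw [← sub_sub_sub_cancel_right x y z, norm_sub_sq_real, hz]
  ring

theorem norm_sub_le_of_inner_sub_sub_eq_zero (hz : ⟪x - z, y - z⟫ = 0) :
    ‖y - z‖ ≤ ‖x - y‖ := by
  refine (sq_le_sq₀ (norm_nonneg _) (norm_nonneg _)).mp ?_
  rw [norm_sub_sq_eq_of_inner_sub_sub_eq_zero hz]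
  exact le_add_of_nonneg_right (sq_nonneg _)

theorem half_norm_sub_le_of_sameRay_of_inner_sub_sub_eq_zero (hxz : SameRay ℝ x z)
    (hz : ⟪x - z, y - z⟫ = 0) (h : |‖x‖ - ‖y‖| ≤ (√3 - 1) / 2 * ‖x - y‖) :
    ‖x - y‖ / 2 ≤ ‖y - z‖ := by
  refine half_le_of_sq_eq_sq_add_sq (norm_nonneg _) (norm_nonneg _)
    (norm_sub_sq_eq_of_inner_sub_sub_eq_zero hz) ?_
  exact (norm_sub_le_abs_norm_sub_norm_add_of_sameRay hxz y).trans (by gcongr)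

-- The constant `(√3 - 1) / 2` is sharp: take `‖e‖ = 1`, `a = √3 / 2`, `c = 0` and `‖v‖ = 1 / 2`.
theorem stmt16_general {e v : E} {a c : ℝ} (ha : 0 ≤ a) (hc : 0 ≤ c) (hev : ⟪e, v⟫ = 0)
    (hx : x = a • e) (hy : y = v + c • e) (h : |‖x‖ - ‖y‖| ≤ (√3 - 1) / 2 * ‖x - y‖) :
    ‖x - y‖ / 2 ≤ ‖v‖ ∧ ‖v‖ ≤ ‖x - y‖ := by
  have hv : v = y - c • e := by rw [hy, add_sub_cancel_right]
  have h_ray : SameRay ℝ x (c • e) :=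
    hx ▸ ((SameRay.refl e).nonneg_smul_left ha).nonneg_smul_right hc
  have h_perp : ⟪x - c • e, y - c • e⟫ = 0 := by
    rw [← hv, hx, ← sub_smul, real_inner_smul_left, hev, mul_zero]
  rw [hv]
  exact ⟨half_norm_sub_le_of_sameRay_of_inner_sub_sub_eq_zero h_ray h_perp h,
    norm_sub_le_of_inner_sub_sub_eq_zero h_perp⟩

end InnerProductSpace

/-- Let `n = m + 2 ≥ 2` and work in ℝⁿ with the standard basis. Let `x = xₙ eₙ` with
`xₙ > 0` and `y = y_{n−1} e_{n−1} + yₙ eₙ` with `y_{n−1}, yₙ ≥ 0`, both in the open unit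
ball, with `δ(x) ≤ δ(y)` and `δ(y) < |x−y|/8` (where `δ(z) = 1 − |z|`). Then
`|x−y|/2 ≤ y_{n−1} ≤ |x−y|`. -/
theorem stmt16 (m : ℕ) (xn yn1 yn : ℝ) (hxn : 0 < xn) (hyn1 : 0 ≤ yn1) (hyn : 0 ≤ yn)
    (x y : EuclideanSpace ℝ (Fin (m + 2)))
    (hx : x = xn • EuclideanSpace.single (Fin.last (m + 1)) (1 : ℝ))
    (hy : y = yn1 • EuclideanSpace.single (⟨m, by omega⟩ : Fin (m + 2)) (1 : ℝ) +
          yn • EuclideanSpace.single (Fin.last (m + 1)) (1 : ℝ))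
    (hxB : ‖x‖ < 1) (hyB : ‖y‖ < 1)
    (hδxy : 1 - ‖x‖ ≤ 1 - ‖y‖) (hδy : 1 - ‖y‖ < ‖x - y‖ / 8) :
    ‖x - y‖ / 2 ≤ yn1 ∧ yn1 ≤ ‖x - y‖ := by
  have h_perp : ⟪(EuclideanSpace.single (Fin.last (m + 1)) (1 : ℝ)),
      yn1 • EuclideanSpace.single (⟨m, by omega⟩ : Fin (m + 2)) (1 : ℝ)⟫ = 0 := by
    simp [EuclideanSpace.inner_single_left, Fin.ext_iff]
  simpa [norm_smul, abs_of_nonneg hyn1] using stmt16_general hxn.le hyn h_perp hx hy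
    (abs_norm_sub_norm_le_of_one_sub_norm_le hxB.le (by linarith) hδy.le)
end
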